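/- Let (X_V, T) be a rank-one subshift with unbounded spacer parameter and let K ∈ ℤ. Define z_K ∈ {0,1}^ℤ by z_K(k) = 1 for k < K and z_K(k) = V(k − K) for k ≥ K. Then z_K ∈ X_V, and z_K is the unique element z of X_V whose first occurrence of 0 is at coordinate K, i.e., the unique z ∈ X_V with z(K) = 0 and z(k) = 1 for all k < K. -/

import Mathlib

/-!
Everything rests on the fact that `V` is, for each `n`, a concatenation of copies of `v n` and of
spacers `1`, so that each `0` of `V` lies inside one of these copies (`Covered`, `exists_copy`).

*Uniqueness.* Put `L = (v n).length`. If `z ∈ X_V` has its first `0` at `K`, the window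
`[K - L, K + L)` of `z` occurs in `V`, and shows there a `0` preceded by `L` ones. The copy of `v n`
containing this `0` must start at it, because `v n` has length `L` and begins with `0`. So `z`
agrees with `v n` from `K` on, for every `n`.

*Membership.* The spacers of the finitely many levels below `N` are bounded, so unboundedness gives
arbitrarily long spacers at levels `n ≥ N` (`exists_large_spacer`). The block `1^{a n i} v n` is a
subword of `v (n+1)`, and `v n` is a prefix of `V` of length `> n`, so any `1^L V(0) ⋯ V(m-1)`
occurs in `V` (`exists_ones_prefix`).
-/

/-- The shift map on bi-infinite sequences: `(shiftZ x) k = x (k+1)`. -/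
def shiftZ {α : Type*} (x : ℤ → α) : ℤ → α := fun k => x (k + 1)

/-- `(q, a, v)` is a rank-one construction sequence: `q` is the cutting parameter
(each `q n > 1`), `a` is the spacer parameter (the relevant values are `a n i` for
`1 ≤ i < q n`), `v 0 = 0`, and
`v (n+1) = v n 1^{a n 1} v n 1^{a n 2} ⋯ v n 1^{a n (q n − 1)} v n`. -/
def IsRankOneSeq (q : ℕ → ℕ) (a : ℕ → ℕ → ℕ) (v : ℕ → List (Fin 2)) : Prop :=
  (∀ n, 1 < q n) ∧ v 0 = [0] ∧
    ∀ n, v (n + 1) = v n ++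
      (List.ofFn fun i : Fin (q n - 1) =>
        List.replicate (a n (i.1 + 1)) 1 ++ v n).flatten

/-- `V` is the infinite rank-one word: every `v n` is an initial segment of `V`. -/
def IsLimitWord (v : ℕ → List (Fin 2)) (V : ℕ → Fin 2) : Prop :=
  ∀ (n k : ℕ) (h : k < (v n).length), V k = (v n).get ⟨k, h⟩

/-- The rank-one subshift determined by the infinite rank-one word `V`: the set of
all bi-infinite binary words all of whose finite subwords occur in `V`. -/
def XV (V : ℕ → Fin 2) : Set (ℤ → Fin 2) :=
  {x | ∀ (i : ℤ) (m : ℕ), ∃ t : ℕ, ∀ k : ℕ, k < m → x (i + (k : ℤ)) = V (t + k)}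

/-- The spacer parameter is bounded. -/
def BoundedSpacer (q : ℕ → ℕ) (a : ℕ → ℕ → ℕ) : Prop :=
  ∃ B, ∀ n i, 1 ≤ i → i < q n → a n i ≤ B

/-- The spacer parameter is unbounded. -/
def UnboundedSpacer (q : ℕ → ℕ) (a : ℕ → ℕ → ℕ) : Prop :=
  ∀ B, ∃ n i, 1 ≤ i ∧ i < q n ∧ B < a n i

/-- The element `z_K` of `{0,1}^ℤ`: all `1`s before coordinate `K`, and a copy of
the infinite rank-one word `V` starting at coordinate `K`. -/
def zWord (V : ℕ → Fin 2) (K : ℤ) : ℤ → Fin 2 :=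
  fun k => if k < K then 1 else V (k - K).toNat

/-- Each occurrence of `0` in `u` lies inside an occurrence of `w` in `u`. Letters are read with
`[·]?`, so for `k < w.length` the equation also says that the copy of `w` fits inside `u`. -/
def Covered (w u : List (Fin 2)) : Prop :=
  ∀ p : ℕ, u[p]? = some 0 →
    ∃ s ≤ p, p < s + w.length ∧ ∀ k < w.length, u[s + k]? = w[k]?

lemma covered_refl (w : List (Fin 2)) : Covered w w := by
  intro p hp
  obtain ⟨h, -⟩ := List.getElem?_eq_some_iff.1 hp
  exact ⟨0, by omega, by omega, fun k _ => by simp⟩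

lemma covered_replicate (w : List (Fin 2)) (n : ℕ) : Covered w (List.replicate n 1) := by
  intro p hp
  simp [List.getElem?_replicate] at hp

lemma Covered.append {w u u' : List (Fin 2)} (h : Covered w u) (h' : Covered w u') :
    Covered w (u ++ u') := by
  intro p hp
  by_cases hlt : p < u.length
  · rw [List.getElem?_append_left hlt] at hp
    obtain ⟨s, hs, hps, hk⟩ := h p hp
    refine ⟨s, hs, hps, fun k hkw => ?_⟩
    have h1 := hk k hkw
    rw [List.getElem?_eq_getElem hkw] at h1
    obtain ⟨h2, -⟩ := List.getElem?_eq_some_iff.1 h1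
    rw [List.getElem?_append_left h2, hk k hkw]
  · rw [List.getElem?_append_right (by omega)] at hp
    obtain ⟨s, hs, hps, hk⟩ := h' _ hp
    refine ⟨u.length + s, by omega, by omega, fun k hkw => ?_⟩
    rw [List.getElem?_append_right (by omega), ← hk k hkw]
    congr 1
    omega

lemma covered_flatten {w : List (Fin 2)} {l : List (List (Fin 2))}
    (h : ∀ u ∈ l, Covered w u) : Covered w l.flatten := by
  induction l with
  | nil => intro p hp; simp at hp
  | cons u l ih =>
    rw [List.flatten_cons]
    exact (h u (by simp)).append (ih fun u' hu' => h u' (by simp [hu']))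

lemma covered_of_le {q : ℕ → ℕ} {a : ℕ → ℕ → ℕ} {v : ℕ → List (Fin 2)}
    (hv : IsRankOneSeq q a v) {n m : ℕ} (h : n ≤ m) : Covered (v n) (v m) := by
  induction m, h using Nat.le_induction with
  | base => exact covered_refl _
  | succ m _ ih =>
    rw [hv.2.2 m]
    refine ih.append (covered_flatten fun u hu => ?_)
    obtain ⟨i, rfl⟩ := (List.mem_ofFn' _ _).1 hu
    exact (covered_replicate _ _).append ih

/-- A spacer of level `n` together with the copy of `v n` after it is a subword of `v (n+1)`. -/
lemma succ_eq_append {q : ℕ → ℕ} {a : ℕ → ℕ → ℕ} {v : ℕ → List (Fin 2)}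
    (hv : IsRankOneSeq q a v) {n i : ℕ} (h1 : 1 ≤ i) (hi : i < q n) :
    ∃ x y : List (Fin 2),
      v (n + 1) = v n ++ (x ++ (List.replicate (a n i) 1 ++ (v n ++ y))) := by
  have hmem : List.replicate (a n i) 1 ++ v n ∈
      (List.ofFn fun i : Fin (q n - 1) => List.replicate (a n (i.1 + 1)) 1 ++ v n) := by
    rw [List.mem_ofFn']
    refine ⟨⟨i - 1, by omega⟩, ?_⟩
    have : i - 1 + 1 = i := by omega
    simp [this]
  obtain ⟨x, y, hxy⟩ := List.append_of_mem hmem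
  refine ⟨x.flatten, y.flatten, ?_⟩
  rw [hv.2.2 n, hxy]
  simp

lemma lt_length {q : ℕ → ℕ} {a : ℕ → ℕ → ℕ} {v : ℕ → List (Fin 2)}
    (hv : IsRankOneSeq q a v) (n : ℕ) : n < (v n).length := by
  induction n with
  | zero => simp [hv.2.1]
  | succ n ih =>
    obtain ⟨x, y, h⟩ := succ_eq_append hv le_rfl (hv.1 n)
    rw [h]
    simp only [List.length_append, List.length_replicate]
    omega

lemma getElem?_eq_limit {v : ℕ → List (Fin 2)} {V : ℕ → Fin 2} (hV : IsLimitWord v V)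
    {n k : ℕ} (h : k < (v n).length) : (v n)[k]? = some (V k) := by
  rw [hV n k h, List.getElem?_eq_getElem h]
  simp

lemma limit_eq_of_getElem? {v : ℕ → List (Fin 2)} {V : ℕ → Fin 2} (hV : IsLimitWord v V)
    {n k : ℕ} {c : Fin 2} (h : (v n)[k]? = some c) : V k = c := by
  obtain ⟨hk, -⟩ := List.getElem?_eq_some_iff.1 h
  rw [getElem?_eq_limit hV hk] at h
  simpa using h

lemma limit_zero {q : ℕ → ℕ} {a : ℕ → ℕ → ℕ} {v : ℕ → List (Fin 2)}
    (hv : IsRankOneSeq q a v) {V : ℕ → Fin 2} (hV : IsLimitWord v V) : V 0 = 0 :=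
  limit_eq_of_getElem? hV (n := 0) (by simp [hv.2.1])

/-- Each `0` of `V` lies inside a copy of `v n`; the letters of `v n` are given here as those of
`V`, of which `v n` is a prefix. -/
lemma exists_copy {q : ℕ → ℕ} {a : ℕ → ℕ → ℕ} {v : ℕ → List (Fin 2)}
    (hv : IsRankOneSeq q a v) {V : ℕ → Fin 2} (hV : IsLimitWord v V) (n : ℕ) {p : ℕ}
    (hp : V p = 0) :
    ∃ s ≤ p, p < s + (v n).length ∧ ∀ k < (v n).length, V (s + k) = V k := by
  have hlen : p < (v (max n p)).length := lt_of_le_of_lt (le_max_right _ _) (lt_length hv _)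
  obtain ⟨s, hs, hps, hk⟩ := covered_of_le hv (le_max_left n p) p
    (by rw [getElem?_eq_limit hV hlen, hp])
  refine ⟨s, hs, hps, fun k hkn => limit_eq_of_getElem? hV (n := max n p) ?_⟩
  rw [hk k hkn, getElem?_eq_limit hV hkn]

lemma exists_large_spacer {q : ℕ → ℕ} {a : ℕ → ℕ → ℕ} (hubdd : UnboundedSpacer q a) (L N : ℕ) :
    ∃ n i, N ≤ n ∧ 1 ≤ i ∧ i < q n ∧ L ≤ a n i := by
  -- The sum of all spacers of level below `N` bounds each of them.
  obtain ⟨n, i, h1, hi, hB⟩ :=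
    hubdd (L + ∑ n ∈ Finset.range N, ∑ i ∈ Finset.range (q n), a n i)
  refine ⟨n, i, ?_, h1, hi, by omega⟩
  by_contra! hn
  have e1 : a n i ≤ ∑ i ∈ Finset.range (q n), a n i :=
    Finset.single_le_sum (f := fun i => a n i) (fun _ _ => Nat.zero_le _)
      (Finset.mem_range.2 hi)
  have e2 : ∑ i ∈ Finset.range (q n), a n i ≤
      ∑ n ∈ Finset.range N, ∑ i ∈ Finset.range (q n), a n i :=
    Finset.single_le_sum (f := fun n => ∑ i ∈ Finset.range (q n), a n i)
      (fun _ _ => Nat.zero_le _) (Finset.mem_range.2 hn)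
  omega

lemma exists_ones_prefix {q : ℕ → ℕ} {a : ℕ → ℕ → ℕ} {v : ℕ → List (Fin 2)}
    (hv : IsRankOneSeq q a v) (hubdd : UnboundedSpacer q a)
    {V : ℕ → Fin 2} (hV : IsLimitWord v V) (L m : ℕ) :
    ∃ t, (∀ k < L, V (t + k) = 1) ∧ ∀ k < m, V (t + L + k) = V k := by
  obtain ⟨n, i, hn, h1, hi, hL⟩ := exists_large_spacer hubdd L m
  obtain ⟨x, y, h⟩ := succ_eq_append hv h1 hi
  have hlen := lt_length hv n
  -- The last `L` letters of the spacer are used.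
  refine ⟨(v n).length + x.length + (a n i - L), fun k hk => ?_, fun k hk => ?_⟩
  · apply limit_eq_of_getElem? hV (n := n + 1)
    rw [h, List.getElem?_append_right (by omega), List.getElem?_append_right (by omega),
      List.getElem?_append_left (by rw [List.length_replicate]; omega),
      List.getElem?_replicate_of_lt (by omega)]
  · apply limit_eq_of_getElem? hV (n := n + 1)
    rw [h, List.getElem?_append_right (by omega), List.getElem?_append_right (by omega),
      List.getElem?_append_right (by rw [List.length_replicate]; omega),
      List.getElem?_append_left (by rw [List.length_replicate]; omega),
      ← getElem?_eq_limit hV (n := n) (k := k) (by omega), List.length_replicate]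
    congr 1
    omega

/-- Let `(X_V, T)` be a rank-one subshift with unbounded spacer parameter and
`K ∈ ℤ`.  Then `z_K ∈ X_V`, and `z_K` is the unique element `z` of `X_V` whose
first occurrence of `0` is at coordinate `K`, i.e. the unique `z ∈ X_V` with
`z(K) = 0` and `z(k) = 1` for all `k < K`. -/
theorem zWord_mem_and_unique
    (q : ℕ → ℕ) (a : ℕ → ℕ → ℕ) (v : ℕ → List (Fin 2)) (hv : IsRankOneSeq q a v)
    (hubdd : UnboundedSpacer q a)
    (V : ℕ → Fin 2) (hV : IsLimitWord v V) (K : ℤ) :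
    zWord V K ∈ XV V ∧ zWord V K K = 0 ∧ (∀ k : ℤ, k < K → zWord V K k = 1) ∧
      ∀ z ∈ XV V, z K = 0 → (∀ k : ℤ, k < K → z k = 1) → z = zWord V K := by
  refine ⟨?_, by simp [zWord, limit_zero hv hV], fun k hk => by simp [zWord, hk], ?_⟩
  · intro i m
    by_cases hi : i < K
    · obtain ⟨L, hL⟩ := Int.eq_ofNat_of_zero_le (show 0 ≤ K - i by omega)
      obtain ⟨t, ht1, ht2⟩ := exists_ones_prefix hv hubdd hV L m
      refine ⟨t, fun k hk => ?_⟩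
      by_cases hkL : k < L
      · rw [ht1 k hkL, zWord, if_pos (by omega)]
      · have e : t + k = t + L + (k - L) := by omega
        rw [e, ht2 _ (by omega), zWord, if_neg (by omega)]
        congr 1
        omega
    · refine ⟨(i - K).toNat, fun k _ => ?_⟩
      rw [zWord, if_neg (by omega)]
      congr 1
      omega
  · intro z hz hz0 hz1
    have key : ∀ n k : ℕ, k < (v n).length → z (K + k) = V k := by
      intro n k hk
      set L := (v n).length with hL
      obtain ⟨t, ht⟩ := hz (K - L) (2 * L)
      have htL : V (t + L) = 0 := by
        rw [← ht L (by omega), ← hz0]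
        congr 1
        omega
      obtain ⟨s, hs, hsL, hcopy⟩ := exists_copy hv hV n htL
      -- Otherwise the leading `0` of the copy would fall among the `L` ones.
      have hst : s = t + L := by
        by_contra hne
        have e0 : V s = 0 := by
          rw [← limit_zero hv hV, ← hcopy 0 (by omega), Nat.add_zero]
        have e1 := ht (s - t) (by omega)
        rw [hz1 _ (by omega), show t + (s - t) = s by omega, e0] at e1
        exact absurd e1 (by decide)
      rw [← hcopy k hk, hst, add_assoc, ← ht (L + k) (by omega)]
      congr 1
      push_cast
      ring
    funext k
    by_cases hk : k < K
    · rw [hz1 k hk, zWord, if_pos hk]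
    · rw [zWord, if_neg hk, ← key _ _ (lt_length hv _)]
      congr 1
      omega
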